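/- Let ψ : (0,∞) → (0,∞) be Borel measurable, bounded on compact subintervals of (0,∞), and bounded away from zero on every ray [r,∞). Then ψ is an interpolation parameter (for the quadratic interpolation of regular pairs of Hilbert spaces) if and only if ψ is pseudoconcave in a neighborhood of infinity, i.e., ψ is equivalent there to some positive concave function. -/

import Mathlib

/-!
Both properties are equivalent to quasiconcavity of `ψ` on `[1, ∞)`, that is, to
`ψ t ≤ c * max 1 (t / s) * ψ s` for all `s, t ≥ 1`.

*Necessity.* If quasiconcavity fails along pairs `(s n, t n)`, the diagonal operator with entries
`min (1, s n / t n)` between sequence spaces is a contraction on both endpoint couples, and the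
unit vectors show that it is unbounded on the `ψ`-spaces
(`quasiconcave_of_isInterpolationParameter`). A quasiconcave `ψ` is equivalent to the concave
function `peetre ψ`.

*Sufficiency.* A positive concave function is quasiconcave, and the bounds on compact intervals
extend this down to `1` (`quasiconcave_of_pseudoconcave`). Then `s ↦ ψ(√s)²` is quasiconcave too,
hence equivalent to a concave function, whose values at the integers are by summation by parts a
positive combination of `1`, `s` and the truncations `min s (k + 1)` (`concave_seq_repr`). The
truncation is comparable with the multiple `(k + 1) s / (k + 1 + s)` of the kernel
`s / (k + 1 + s)`, which computes the quadratic `K`-functional of a weighted `L²` couple. So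
`ψ(t)²` is comparable with a mixture of kernels (`exists_kernelMix`), for each of which the
operator bound follows by splitting `f` optimally (`integral_kernel_le`). Integrating the mixture
gives the bound for `ψ` (`isInterpolationParameter_of_quasiconcave`).

Membership in a weighted space constrains only the modulus `‖f‖`, so `f` itself may fail to be
measurable and these spaces need not be closed under addition. The argument therefore splits `f`
only by measurable real multipliers, and estimates only moduli on the target side.
-/


open MeasureTheory

/-- Membership in the weighted `L²` space with weight `w` over the measure `μ`. -/
def WMem {Ω : Type} [MeasurableSpace Ω] (μ : Measure Ω) (w : Ω → ℝ) (f : Ω → ℂ) :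
    Prop :=
  Integrable (fun x => w x ^ 2 * ‖f x‖ ^ 2) μ

/-- The weighted `L²` norm. -/
noncomputable def wnorm {Ω : Type} [MeasurableSpace Ω] (μ : Measure Ω) (w : Ω → ℝ)
    (f : Ω → ℂ) : ℝ :=
  (∫ x, w x ^ 2 * ‖f x‖ ^ 2 ∂μ) ^ ((1 : ℝ) / 2)

/-- `ψ` is an interpolation parameter for the quadratic interpolation of regular pairs
of (separable) Hilbert spaces.  By the spectral theorem, every regular Hilbert couple
`[X₀, X₁]` is unitarily equivalent to a weighted-`L²` model `[L²(μ), L²(a² μ)]` with a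
measurable weight `a ≥ 1` (the generating operator `J` becoming multiplication by `a`),
and then `X_ψ = dom ψ(J)` is the weighted space `L²(ψ(a)² μ)`.  The interpolation
property: every linear map bounded on both endpoint couples is bounded on the
`ψ`-spaces. -/
def IsInterpolationParameter (ψ : ℝ → ℝ) : Prop :=
  ∀ (Ω₁ Ω₂ : Type) (_ : MeasurableSpace Ω₁) (_ : MeasurableSpace Ω₂)
    (μ₁ : Measure Ω₁) (μ₂ : Measure Ω₂) (a : Ω₁ → ℝ) (b : Ω₂ → ℝ),
    Measurable a → Measurable b → (∀ x, 1 ≤ a x) → (∀ x, 1 ≤ b x) →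
    ∀ T : (Ω₁ → ℂ) →ₗ[ℂ] (Ω₂ → ℂ),
      (∃ C0 : ℝ, 0 < C0 ∧ ∀ f, WMem μ₁ (fun _ => 1) f →
        WMem μ₂ (fun _ => 1) (T f) ∧
          wnorm μ₂ (fun _ => 1) (T f) ≤ C0 * wnorm μ₁ (fun _ => 1) f) →
      (∃ C1 : ℝ, 0 < C1 ∧ ∀ f, WMem μ₁ a f →
        WMem μ₂ b (T f) ∧ wnorm μ₂ b (T f) ≤ C1 * wnorm μ₁ a f) →
      ∃ C : ℝ, 0 < C ∧ ∀ f, WMem μ₁ (fun x => ψ (a x)) f →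
        WMem μ₂ (fun x => ψ (b x)) (T f) ∧
          wnorm μ₂ (fun x => ψ (b x)) (T f) ≤ C * wnorm μ₁ (fun x => ψ (a x)) f

/-! ### The Peetre infimum -/

/-- The Peetre-type infimum `t ↦ inf_{s ≥ 1} (1 + t / s) φ(s)`.  Being an infimum of affine
functions it is concave; for a quasiconcave `φ` it is equivalent to `φ`. -/
noncomputable def peetre (φ : ℝ → ℝ) (t : ℝ) : ℝ :=
  ⨅ s : Set.Ici (1 : ℝ), (1 + t / s.1) * φ s.1

section Peetre

variable {φ : ℝ → ℝ}

lemma peetre_le (hφ : ∀ s, 1 ≤ s → 0 < φ s) {t s : ℝ} (ht : 0 ≤ t) (hs : 1 ≤ s) :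
    peetre φ t ≤ (1 + t / s) * φ s := by
  refine ciInf_le (f := fun s : Set.Ici (1 : ℝ) => (1 + t / s.1) * φ s.1) ⟨0, ?_⟩ ⟨s, hs⟩
  rintro _ ⟨⟨u, hu⟩, rfl⟩
  have hu' : (1 : ℝ) ≤ u := hu
  have := hφ u hu
  have : 0 < u := by linarith
  dsimp only
  positivity

lemma le_peetre {t x : ℝ} (h : ∀ s, 1 ≤ s → x ≤ (1 + t / s) * φ s) : x ≤ peetre φ t := by
  have : Nonempty (Set.Ici (1 : ℝ)) := ⟨⟨1, Set.self_mem_Ici⟩⟩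
  exact le_ciInf fun s => h s.1 s.2

lemma peetre_nonneg (hφ : ∀ s, 1 ≤ s → 0 < φ s) {t : ℝ} (ht : 0 ≤ t) : 0 ≤ peetre φ t := by
  refine le_peetre fun s hs => ?_
  have := hφ s hs
  have : 0 < s := by linarith
  positivity

lemma peetre_concave (hφ : ∀ s, 1 ≤ s → 0 < φ s) : ConcaveOn ℝ (Set.Ici 0) (peetre φ) := by
  refine ⟨convex_Ici 0, fun x hx y hy a b ha hb hab => le_peetre fun s hs => ?_⟩
  have h1 := mul_le_mul_of_nonneg_left (peetre_le hφ hx hs) ha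
  have h2 := mul_le_mul_of_nonneg_left (peetre_le hφ hy hs) hb
  simp only [smul_eq_mul]
  have hb' : b = 1 - a := by linarith
  calc _ ≤ _ := add_le_add h1 h2
    _ = _ := by subst hb'; ring

lemma peetre_mono (hφ : ∀ s, 1 ≤ s → 0 < φ s) {t u : ℝ} (ht : 0 ≤ t) (htu : t ≤ u) :
    peetre φ t ≤ peetre φ u := by
  refine le_peetre fun s hs => (peetre_le hφ ht hs).trans ?_
  have := hφ s hs
  have : 0 < s := by linarith
  gcongr

lemma peetre_two_mul (hφ : ∀ s, 1 ≤ s → 0 < φ s) {t : ℝ} (ht : 0 ≤ t) :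
    peetre φ (2 * t) ≤ 2 * peetre φ t := by
  have : peetre φ (2 * t) / 2 ≤ peetre φ t := by
    refine le_peetre fun s hs => ?_
    have h := peetre_le hφ (show 0 ≤ 2 * t by linarith) hs
    have h1 := hφ s hs
    have e : (1 + 2 * t / s) * φ s = 2 * ((1 + t / s) * φ s) - φ s := by ring
    linarith
  linarith

lemma peetre_le_two (hφ : ∀ s, 1 ≤ s → 0 < φ s) {t : ℝ} (ht : 1 ≤ t) :
    peetre φ t ≤ 2 * φ t := by
  have h := peetre_le hφ (show 0 ≤ t by linarith) ht
  rw [div_self (by linarith)] at h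
  linarith

lemma le_mul_peetre (hφ : ∀ s, 1 ≤ s → 0 < φ s) {c : ℝ} (hc : 0 < c)
    (h : ∀ s t, 1 ≤ s → 1 ≤ t → φ t ≤ c * max 1 (t / s) * φ s) {t : ℝ} (ht : 1 ≤ t) :
    φ t ≤ c * peetre φ t := by
  have : φ t / c ≤ peetre φ t := by
    refine le_peetre fun s hs => ?_
    have h0 := hφ s hs
    have hs0 : 0 < s := by linarith
    have hts : 0 ≤ t / s := by positivity
    rw [div_le_iff₀ hc]
    calc φ t ≤ c * max 1 (t / s) * φ s := h s t hs ht
      _ ≤ c * (1 + t / s) * φ s := by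
        gcongr
        exact max_le (by linarith) (by linarith)
      _ = _ := by ring
  rw [div_le_iff₀ hc] at this
  linarith

end Peetre

/-! ### Concave sequences as mixtures of truncations -/

/-- A nonnegative increasing concave sequence is a positive combination of the constant, the
identity and the truncations `n ↦ min n (k + 1)`: discrete second-order summation by parts. -/
lemma concave_seq_repr (g : ℕ → ℝ) (hmono : Monotone g)
    (hconc : ∀ n, g (n + 2) - g (n + 1) ≤ g (n + 1) - g n) :
    ∃ (D : ℝ) (e : ℕ → ℝ), 0 ≤ D ∧ (∀ k, 0 ≤ e k) ∧
      ∀ n : ℕ, HasSum (fun k : ℕ => e k * min (n : ℝ) (k + 1)) (g n - g 0 - n * D) := by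
  set d : ℕ → ℝ := fun n => g (n + 1) - g n with hd
  have hd0 : ∀ n, 0 ≤ d n := fun n => sub_nonneg.2 (hmono (Nat.le_succ n))
  have hanti : Antitone d := antitone_nat_of_succ_le fun n => hconc n
  have hlim := tendsto_atTop_ciInf hanti ⟨0, by rintro _ ⟨n, rfl⟩; exact hd0 n⟩
  refine ⟨⨅ n, d n, fun k => d k - d (k + 1), Real.iInf_nonneg hd0,
    fun k => sub_nonneg.2 (hanti (Nat.le_succ k)), fun n => ?_⟩
  have hpart0 : ∀ n : ℕ, ∑ k ∈ Finset.range n, (d k - d (k + 1)) * ((k : ℝ) + 1)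
      = g n - g 0 - n * d n := by
    intro n
    induction n with
    | zero => simp
    | succ n ih => rw [Finset.sum_range_succ, ih]; push_cast; simp only [hd]; ring
  have hpart : ∀ m : ℕ, ∑ k ∈ Finset.range (n + m), (d k - d (k + 1)) * min (n : ℝ) (k + 1)
      = g n - g 0 - n * d (n + m) := by
    intro m
    induction m with
    | zero =>
      rw [add_zero, ← hpart0 n]
      refine Finset.sum_congr rfl fun k hk => ?_
      have : ((k + 1 : ℕ) : ℝ) ≤ n := by exact_mod_cast Finset.mem_range.1 hk
      push_cast at this
      rw [min_eq_right this]
    | succ m ih =>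
      rw [← add_assoc, Finset.sum_range_succ, ih]
      have : (n : ℝ) ≤ ((n + m : ℕ) : ℝ) + 1 := by push_cast; linarith [Nat.cast_nonneg (α := ℝ) m]
      rw [min_eq_left this]
      ring
  rw [hasSum_iff_tendsto_nat_of_nonneg]
  · rw [← Filter.tendsto_add_atTop_iff_nat n]
    simp_rw [add_comm _ n, hpart]
    refine Filter.Tendsto.sub tendsto_const_nhds (Filter.Tendsto.const_mul _ ?_)
    have := (Filter.tendsto_add_atTop_iff_nat n).2 hlim
    simpa only [add_comm n] using this
  · intro k
    exact mul_nonneg (sub_nonneg.2 (hanti (Nat.le_succ k)))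
      (le_min (Nat.cast_nonneg n) (by positivity))

open scoped ENNReal in
/-- The mixture of kernels `t² / (k + 1 + t²)`, `1` and `t²` with coefficients `e`, `A`, `D`. -/
noncomputable def kernelMix (A D : ℝ≥0∞) (e : ℕ → ℝ≥0∞) (t : ℝ) : ℝ≥0∞ :=
  A + D * ENNReal.ofReal (t ^ 2)
    + ∑' k : ℕ, e k * ENNReal.ofReal (t ^ 2 / ((k : ℝ) + 1 + t ^ 2))

open scoped ENNReal in
/-- The same mixture with the truncations `min s (k + 1)` in place of the rational kernels. -/
noncomputable def minMix (A D : ℝ≥0∞) (e : ℕ → ℝ≥0∞) (s : ℝ) : ℝ≥0∞ :=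
  A + D * ENNReal.ofReal s + ∑' k : ℕ, e k * ENNReal.ofReal (min s ((k : ℝ) + 1))

open scoped ENNReal in
lemma minMix_mono (A D : ℝ≥0∞) (e : ℕ → ℝ≥0∞) : Monotone (minMix A D e) := by
  intro s t h
  unfold minMix
  gcongr

open scoped ENNReal in
/-- The truncation `min s (k + 1)` is comparable with `(k + 1) s / (k + 1 + s)`. -/
lemma kernelMix_compare (A D : ℝ≥0∞) (e : ℕ → ℝ≥0∞) (t : ℝ) (ht : 1 ≤ t) :
    minMix A D e (t ^ 2)
        ≤ 2 * kernelMix A D (fun k => e k * ENNReal.ofReal ((k : ℝ) + 1)) t ∧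
      kernelMix A D (fun k => e k * ENNReal.ofReal ((k : ℝ) + 1)) t ≤ minMix A D e (t ^ 2) := by
  have hs : 0 < t ^ 2 := by positivity
  unfold minMix kernelMix
  generalize t ^ 2 = s at hs
  have h2 : (1 : ℝ≥0∞) ≤ 2 := by norm_num
  constructor
  · rw [mul_add, ← ENNReal.tsum_mul_left]
    refine add_le_add (le_mul_of_one_le_left' h2) (ENNReal.tsum_le_tsum fun k => ?_)
    rw [mul_assoc, ← ENNReal.ofReal_mul (by positivity), mul_left_comm,
      show (2 : ℝ≥0∞) = ENNReal.ofReal 2 by simp, ← ENNReal.ofReal_mul (by norm_num)]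
    gcongr
    have hk : (0 : ℝ) < (k : ℝ) + 1 := by positivity
    generalize (k : ℝ) + 1 = κ at hk
    rw [mul_div_assoc', mul_div_assoc', le_div_iff₀ (by positivity)]
    rcases le_total s κ with h | h
    · rw [min_eq_left h]; nlinarith
    · rw [min_eq_right h]; nlinarith
  · refine add_le_add le_rfl (ENNReal.tsum_le_tsum fun k => ?_)
    rw [mul_assoc, ← ENNReal.ofReal_mul (by positivity)]
    gcongr
    have hk : (0 : ℝ) < (k : ℝ) + 1 := by positivity
    generalize (k : ℝ) + 1 = κ at hk
    rw [mul_div_assoc', div_le_iff₀ (by positivity)]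
    rcases le_total s κ with h | h
    · rw [min_eq_left h]; nlinarith
    · rw [min_eq_right h]; nlinarith

open scoped ENNReal in
/-- A quasiconcave `ψ` has `ψ(t)²` comparable on `[1, ∞)` with a mixture of the kernels of the
quadratic `K`-functional. -/
lemma exists_kernelMix (ψ : ℝ → ℝ) (hψ : ∀ s, 1 ≤ s → 0 < ψ s) (c : ℝ) (hc : 0 < c)
    (h : ∀ s t, 1 ≤ s → 1 ≤ t → ψ t ≤ c * max 1 (t / s) * ψ s) :
    ∃ (A D : ℝ≥0∞) (e : ℕ → ℝ≥0∞) (K : ℝ), 0 < K ∧ ∀ t, 1 ≤ t →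
      ENNReal.ofReal (ψ t ^ 2) ≤ ENNReal.ofReal K * kernelMix A D e t ∧
      kernelMix A D e t ≤ ENNReal.ofReal K * ENNReal.ofReal (ψ t ^ 2) := by
  -- Quasiconcavity of `ψ` passes to `s ↦ ψ(√s)²` because the factor `t / s` gets squared.
  set φ : ℝ → ℝ := fun s => ψ (√s) ^ 2 with hφd
  have hsq : ∀ s : ℝ, 1 ≤ s → 1 ≤ √s := fun s hs => Real.one_le_sqrt.2 hs
  have hφ : ∀ s, 1 ≤ s → 0 < φ s := fun s hs => pow_pos (hψ _ (hsq s hs)) 2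
  have hφq : ∀ s t, 1 ≤ s → 1 ≤ t → φ t ≤ c ^ 2 * max 1 (t / s) * φ s := by
    intro s t hs ht
    have h1 := h _ _ (hsq s hs) (hsq t ht)
    have h2 : (max 1 (√t / √s)) ^ 2 = max 1 (t / s) := by
      rw [← Real.sqrt_div' _ (by linarith)]
      have hts : 0 ≤ t / s := by positivity
      rcases le_total 1 (t / s) with h' | h'
      · rw [max_eq_right h', max_eq_right (Real.one_le_sqrt.2 h'), Real.sq_sqrt hts]
      · rw [max_eq_left h', max_eq_left (Real.sqrt_le_one.2 h'), one_pow]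
    calc φ t ≤ (c * max 1 (√t / √s) * ψ (√s)) ^ 2 :=
          pow_le_pow_left₀ (hψ _ (hsq t ht)).le h1 2
      _ = c ^ 2 * (max 1 (√t / √s)) ^ 2 * φ s := by simp only [hφd]; ring
      _ = _ := by rw [h2]
  set G := peetre φ with hG
  have hGmono : Monotone fun n : ℕ => G n := fun m n hmn =>
    peetre_mono hφ (Nat.cast_nonneg m) (by exact_mod_cast hmn)
  have hGconc : ∀ n : ℕ, G ((n + 2 : ℕ) : ℝ) - G ((n + 1 : ℕ) : ℝ)
      ≤ G ((n + 1 : ℕ) : ℝ) - G (n : ℝ) := by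
    intro n
    have hx : (n : ℝ) ∈ Set.Ici (0 : ℝ) := Set.mem_Ici.2 (Nat.cast_nonneg n)
    have hy : ((n + 2 : ℕ) : ℝ) ∈ Set.Ici (0 : ℝ) := Set.mem_Ici.2 (Nat.cast_nonneg _)
    have := (peetre_concave hφ).2 hx hy (show (0 : ℝ) ≤ 1 / 2 by norm_num)
      (show (0 : ℝ) ≤ 1 / 2 by norm_num) (by norm_num)
    have e : (1 / 2 : ℝ) • (n : ℝ) + (1 / 2 : ℝ) • ((n + 2 : ℕ) : ℝ) = ((n + 1 : ℕ) : ℝ) := by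
      simp only [smul_eq_mul]; push_cast; ring
    rw [e] at this
    simp only [smul_eq_mul] at this
    rw [hG]
    linarith
  obtain ⟨D, e, hD, he, hsum⟩ := concave_seq_repr (fun n : ℕ => G n) hGmono hGconc
  have hG0 : 0 ≤ G 0 := peetre_nonneg hφ le_rfl
  set A' := ENNReal.ofReal (G 0)
  set D' := ENNReal.ofReal D
  set e' : ℕ → ℝ≥0∞ := fun k => ENNReal.ofReal (e k)
  have hmix : ∀ n : ℕ, minMix A' D' e' n = ENNReal.ofReal (G n) := by
    intro n
    have h1 := hsum n
    have hnn : ∀ k : ℕ, 0 ≤ e k * min (n : ℝ) (k + 1) := fun k =>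
      mul_nonneg (he k) (le_min (Nat.cast_nonneg n) (by positivity))
    have h2 : ∑' k : ℕ, e' k * ENNReal.ofReal (min (n : ℝ) (k + 1))
        = ENNReal.ofReal (G n - G 0 - n * D) := by
      have h3 := ENNReal.ofReal_tsum_of_nonneg hnn h1.summable
      rw [h1.tsum_eq] at h3
      simp only [Nat.cast_zero] at h3
      rw [h3]
      exact tsum_congr fun k => (ENNReal.ofReal_mul (he k)).symm
    have h4 : 0 ≤ G n - G 0 - n * D := by
      have := h1.nonneg hnn
      simpa using this
    unfold minMix
    rw [h2, ← ENNReal.ofReal_mul hD, ← ENNReal.ofReal_add hG0 (by positivity),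
      ← ENNReal.ofReal_add (by positivity) h4]
    congr 1
    ring
  refine ⟨A', D', fun k => e' k * ENNReal.ofReal ((k : ℝ) + 1), max (4 * c ^ 2) 4,
    by positivity, fun t ht => ?_⟩
  obtain ⟨k1, k2⟩ := kernelMix_compare A' D' e' t ht
  have hs : 1 ≤ t ^ 2 := one_le_pow₀ ht
  have hψφ : ψ t ^ 2 = φ (t ^ 2) := by
    simp only [hφd]; rw [Real.sqrt_sq (by linarith)]
  rw [hψφ]
  generalize t ^ 2 = s at *
  have hn1 : 1 ≤ ⌊s⌋₊ := Nat.le_floor (by simpa using hs)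
  have hn1' : (1 : ℝ) ≤ (⌊s⌋₊ : ℝ) := by exact_mod_cast hn1
  have hns : (⌊s⌋₊ : ℝ) ≤ s := Nat.floor_le (by linarith)
  have hsn : s ≤ ((⌊s⌋₊ + 1 : ℕ) : ℝ) := by push_cast; exact (Nat.lt_floor_add_one s).le
  generalize ⌊s⌋₊ = n at *
  have hstep : G ((n + 1 : ℕ) : ℝ) ≤ 2 * G n :=
    (peetre_mono hφ (Nat.cast_nonneg _) (by push_cast; linarith)).trans
      (peetre_two_mul hφ (Nat.cast_nonneg n))
  have hφs : φ s ≤ 2 * c ^ 2 * G n := by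
    have h1 := le_mul_peetre hφ (by positivity) hφq hs
    have h2 : G s ≤ 2 * G n := (peetre_mono hφ (by linarith) hsn).trans hstep
    nlinarith [sq_nonneg c]
  have hGn : 0 ≤ G n := peetre_nonneg hφ (Nat.cast_nonneg n)
  constructor
  · calc ENNReal.ofReal (φ s) ≤ ENNReal.ofReal (2 * c ^ 2 * G n) := ENNReal.ofReal_le_ofReal hφs
      _ = ENNReal.ofReal (2 * c ^ 2) * minMix A' D' e' n := by
        rw [hmix, ENNReal.ofReal_mul (by positivity)]
      _ ≤ ENNReal.ofReal (2 * c ^ 2) * (2 * kernelMix A' D'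
            (fun k => e' k * ENNReal.ofReal ((k : ℝ) + 1)) t) := by
        gcongr
        exact (minMix_mono _ _ _ hns).trans k1
      _ = ENNReal.ofReal (4 * c ^ 2) * kernelMix A' D'
            (fun k => e' k * ENNReal.ofReal ((k : ℝ) + 1)) t := by
        rw [← mul_assoc, show (2 : ℝ≥0∞) = ENNReal.ofReal 2 by simp,
          ← ENNReal.ofReal_mul (by positivity)]
        congr 2
        ring
      _ ≤ _ := by
        gcongr
        exact le_max_left _ _
  · calc _ ≤ minMix A' D' e' s := k2
      _ ≤ minMix A' D' e' ((n + 1 : ℕ) : ℝ) := minMix_mono _ _ _ hsn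
      _ = ENNReal.ofReal (G ((n + 1 : ℕ) : ℝ)) := hmix _
      _ ≤ ENNReal.ofReal (4 * φ s) := by
        refine ENNReal.ofReal_le_ofReal (hstep.trans ?_)
        have h1 : G n ≤ G s := peetre_mono hφ (Nat.cast_nonneg n) hns
        have h2 : G s ≤ 2 * φ s := peetre_le_two hφ hs
        linarith
      _ = ENNReal.ofReal 4 * ENNReal.ofReal (φ s) := ENNReal.ofReal_mul (by norm_num)
      _ ≤ _ := by
        gcongr
        exact le_max_right _ _

/-! ### The quadratic `K`-functional -/

section Operators

variable {Ω₁ Ω₂ : Type} [MeasurableSpace Ω₁] [MeasurableSpace Ω₂] {μ₁ : Measure Ω₁}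
  {μ₂ : Measure Ω₂}

lemma integral_le_of_wnorm_le {u : Ω₁ → ℝ} {v : Ω₂ → ℝ} {f : Ω₁ → ℂ} {g : Ω₂ → ℂ} {C : ℝ}
    (h : wnorm μ₂ v g ≤ C * wnorm μ₁ u f) :
    ∫ x, v x ^ 2 * ‖g x‖ ^ 2 ∂μ₂ ≤ C ^ 2 * ∫ x, u x ^ 2 * ‖f x‖ ^ 2 ∂μ₁ := by
  unfold wnorm at h
  rw [← Real.sqrt_eq_rpow, ← Real.sqrt_eq_rpow] at h
  have h1 : 0 ≤ ∫ x, v x ^ 2 * ‖g x‖ ^ 2 ∂μ₂ := integral_nonneg fun x => by positivity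
  have h2 : 0 ≤ ∫ x, u x ^ 2 * ‖f x‖ ^ 2 ∂μ₁ := integral_nonneg fun x => by positivity
  calc _ = √(∫ x, v x ^ 2 * ‖g x‖ ^ 2 ∂μ₂) ^ 2 := (Real.sq_sqrt h1).symm
    _ ≤ (C * √(∫ x, u x ^ 2 * ‖f x‖ ^ 2 ∂μ₁)) ^ 2 := pow_le_pow_left₀ (Real.sqrt_nonneg _) h 2
    _ = _ := by rw [mul_pow, Real.sq_sqrt h2]

lemma integrable_mul_of_le {F h : Ω₁ → ℝ} (hF : Integrable F μ₁) (hh : Measurable h) {c : ℝ}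
    (h0 : ∀ x, 0 ≤ h x) (hc : ∀ x, h x ≤ c) : Integrable (fun x => h x * F x) μ₁ := by
  refine (hF.norm.const_mul c).mono' (hh.aestronglyMeasurable.mul hF.aestronglyMeasurable) ?_
  refine Filter.Eventually.of_forall fun x => ?_
  rw [norm_mul, Real.norm_of_nonneg (h0 x)]
  exact mul_le_mul_of_nonneg_right (hc x) (norm_nonneg _)

/-- The quadratic `K`-functional of a single complex number with respect to the weights `1` and
`s / κ`: any decomposition costs at least `s / (κ + s)`. -/
lemma pointwise_K {κ s : ℝ} (hκ : 0 < κ) (hs : 0 ≤ s) (z w : ℂ) :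
    s / (κ + s) * ‖z + w‖ ^ 2 ≤ ‖z‖ ^ 2 + κ⁻¹ * (s * ‖w‖ ^ 2) := by
  have h1 : ‖z + w‖ ^ 2 ≤ (‖z‖ + ‖w‖) ^ 2 := pow_le_pow_left₀ (norm_nonneg _) (norm_add_le z w) 2
  have h2 : s / (κ + s) * (‖z‖ + ‖w‖) ^ 2 ≤ ‖z‖ ^ 2 + κ⁻¹ * (s * ‖w‖ ^ 2) := by
    rw [← sub_nonneg]
    have : ‖z‖ ^ 2 + κ⁻¹ * (s * ‖w‖ ^ 2) - s / (κ + s) * (‖z‖ + ‖w‖) ^ 2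
        = (κ * ‖z‖ - s * ‖w‖) ^ 2 / (κ * (κ + s)) := by
      field_simp
      ring
    rw [this]
    positivity
  exact (mul_le_mul_of_nonneg_left h1 (by positivity)).trans h2

/-- An operator bounded on both endpoint spaces is bounded for the quadratic `K`-functional. -/
lemma integral_kernel_le {a : Ω₁ → ℝ} {b : Ω₂ → ℝ} (ha : Measurable a) (hb : Measurable b)
    (T : (Ω₁ → ℂ) →ₗ[ℂ] (Ω₂ → ℂ)) {M : ℝ}
    (h0 : ∀ f, WMem μ₁ (fun _ => 1) f → WMem μ₂ (fun _ => 1) (T f) ∧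
      ∫ x, ‖T f x‖ ^ 2 ∂μ₂ ≤ M * ∫ x, ‖f x‖ ^ 2 ∂μ₁)
    (h1 : ∀ f, WMem μ₁ a f → WMem μ₂ b (T f) ∧
      ∫ x, b x ^ 2 * ‖T f x‖ ^ 2 ∂μ₂ ≤ M * ∫ x, a x ^ 2 * ‖f x‖ ^ 2 ∂μ₁)
    {κ : ℝ} (hκ : 0 < κ) {f : Ω₁ → ℂ} (hf : WMem μ₁ (fun _ => 1) f) :
    ∫ x, b x ^ 2 / (κ + b x ^ 2) * ‖T f x‖ ^ 2 ∂μ₂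
      ≤ M * ∫ x, a x ^ 2 / (κ + a x ^ 2) * ‖f x‖ ^ 2 ∂μ₁ := by
  have hF : Integrable (fun x => ‖f x‖ ^ 2) μ₁ := by simpa [WMem] using hf
  -- The optimal decomposition `f = p + q`.
  set p : Ω₁ → ℂ := fun x => ((a x ^ 2 / (κ + a x ^ 2) : ℝ) : ℂ) * f x with hp
  set q : Ω₁ → ℂ := fun x => ((κ / (κ + a x ^ 2) : ℝ) : ℂ) * f x with hq
  have hpq : f = p + q := by
    funext x
    have h : (a x ^ 2 / (κ + a x ^ 2) : ℝ) + κ / (κ + a x ^ 2) = 1 := by field_simp; ring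
    simp only [hp, hq, Pi.add_apply, ← add_mul, ← Complex.ofReal_add, h]
    simp
  have hpn : ∀ x, ‖p x‖ ^ 2 = (a x ^ 2 / (κ + a x ^ 2)) ^ 2 * ‖f x‖ ^ 2 := by
    intro x
    simp only [hp, norm_mul, Complex.norm_real, mul_pow, Real.norm_eq_abs, sq_abs]
  have hqn : ∀ x, a x ^ 2 * ‖q x‖ ^ 2 = a x ^ 2 * (κ / (κ + a x ^ 2)) ^ 2 * ‖f x‖ ^ 2 := by
    intro x
    simp only [hq, norm_mul, Complex.norm_real, mul_pow, Real.norm_eq_abs, sq_abs]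
    ring
  have hpI : Integrable (fun x => ‖p x‖ ^ 2) μ₁ := by
    simp_rw [hpn]
    refine integrable_mul_of_le hF (by fun_prop) (c := 1) (fun x => by positivity) fun x => ?_
    refine pow_le_one₀ (by positivity) ?_
    rw [div_le_one (by positivity)]
    linarith
  have hqI : Integrable (fun x => a x ^ 2 * ‖q x‖ ^ 2) μ₁ := by
    simp_rw [hqn]
    refine integrable_mul_of_le hF (by fun_prop) (c := κ) (fun x => by positivity) fun x => ?_
    rw [div_pow, mul_div_assoc', div_le_iff₀ (by positivity)]
    nlinarith [sq_nonneg (a x), sq_nonneg (a x ^ 2), mul_nonneg hκ.le (sq_nonneg (a x ^ 2)),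
      pow_pos hκ 3, mul_nonneg (sq_nonneg κ) (sq_nonneg (a x))]
  obtain ⟨hTp, hTp'⟩ := h0 p (by simpa [WMem] using hpI)
  obtain ⟨hTq, hTq'⟩ := h1 q hqI
  have hTf : Integrable (fun x => ‖T f x‖ ^ 2) μ₂ := by simpa [WMem] using (h0 f hf).1
  have hTpI : Integrable (fun x => ‖T p x‖ ^ 2) μ₂ := by simpa [WMem] using hTp
  have hTqI : Integrable (fun x => κ⁻¹ * (b x ^ 2 * ‖T q x‖ ^ 2)) μ₂ := Integrable.const_mul hTq _
  have hL : Integrable (fun x => b x ^ 2 / (κ + b x ^ 2) * ‖T f x‖ ^ 2) μ₂ := by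
    refine integrable_mul_of_le hTf (by fun_prop) (c := 1) (fun x => by positivity) fun x => ?_
    rw [div_le_one (by positivity)]
    linarith
  have hsplit : ∫ x, a x ^ 2 / (κ + a x ^ 2) * ‖f x‖ ^ 2 ∂μ₁
      = ∫ x, ‖p x‖ ^ 2 ∂μ₁ + κ⁻¹ * ∫ x, a x ^ 2 * ‖q x‖ ^ 2 ∂μ₁ := by
    rw [← integral_const_mul, ← integral_add hpI (hqI.const_mul _)]
    refine integral_congr_ae (Filter.Eventually.of_forall fun x => ?_)
    simp only [hpn, hqn]
    field_simp
    ring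
  calc _ ≤ ∫ x, (‖T p x‖ ^ 2 + κ⁻¹ * (b x ^ 2 * ‖T q x‖ ^ 2)) ∂μ₂ := by
        refine integral_mono hL (hTpI.add hTqI) fun x => ?_
        have hx : T f x = T p x + T q x := by
          conv_lhs => rw [hpq, map_add]
          rfl
        simp only [hx]
        exact pointwise_K hκ (sq_nonneg _) _ _
    _ = ∫ x, ‖T p x‖ ^ 2 ∂μ₂ + κ⁻¹ * ∫ x, b x ^ 2 * ‖T q x‖ ^ 2 ∂μ₂ := by
        rw [integral_add hTpI hTqI, integral_const_mul]
    _ ≤ M * ∫ x, ‖p x‖ ^ 2 ∂μ₁ + κ⁻¹ * (M * ∫ x, a x ^ 2 * ‖q x‖ ^ 2 ∂μ₁) := by gcongr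
    _ = _ := by rw [hsplit]; ring

open scoped ENNReal in
lemma lintegral_le_of_integral_le {F : Ω₁ → ℝ} {H : Ω₂ → ℝ} (hF : Integrable F μ₁)
    (hH : Integrable H μ₂) (hF0 : ∀ x, 0 ≤ F x) (hH0 : ∀ x, 0 ≤ H x) {M : ℝ} (hM : 0 ≤ M)
    (h : ∫ x, H x ∂μ₂ ≤ M * ∫ x, F x ∂μ₁) :
    ∫⁻ x, ENNReal.ofReal (H x) ∂μ₂ ≤ ENNReal.ofReal M * ∫⁻ x, ENNReal.ofReal (F x) ∂μ₁ := by
  rw [← ofReal_integral_eq_lintegral_ofReal hF (Filter.Eventually.of_forall hF0),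
    ← ofReal_integral_eq_lintegral_ofReal hH (Filter.Eventually.of_forall hH0),
    ← ENNReal.ofReal_mul hM]
  exact ENNReal.ofReal_le_ofReal h

open scoped ENNReal in
lemma lintegral_kernelMix (A D : ℝ≥0∞) (e : ℕ → ℝ≥0∞) {a : Ω₁ → ℝ} (ha : Measurable a)
    {F : Ω₁ → ℝ} (hF : AEStronglyMeasurable F μ₁) :
    ∫⁻ x, kernelMix A D e (a x) * ENNReal.ofReal (F x) ∂μ₁
      = A * ∫⁻ x, ENNReal.ofReal (F x) ∂μ₁ + D * ∫⁻ x, ENNReal.ofReal (a x ^ 2 * F x) ∂μ₁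
        + ∑' k : ℕ, e k * ∫⁻ x, ENNReal.ofReal (a x ^ 2 / ((k : ℝ) + 1 + a x ^ 2) * F x) ∂μ₁ := by
  have hF' : AEMeasurable F μ₁ := hF.aemeasurable
  have ha' : AEMeasurable a μ₁ := ha.aemeasurable
  have m1 : AEMeasurable (fun x => ENNReal.ofReal (F x)) μ₁ := hF'.ennreal_ofReal
  have m2 : AEMeasurable (fun x => ENNReal.ofReal (a x ^ 2 * F x)) μ₁ := by fun_prop
  have m3 : ∀ k : ℕ, AEMeasurable
      (fun x => ENNReal.ofReal (a x ^ 2 / ((k : ℝ) + 1 + a x ^ 2) * F x)) μ₁ := by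
    intro k
    fun_prop
  simp_rw [← lintegral_const_mul'' _ m1, ← lintegral_const_mul'' _ m2,
    ← lintegral_const_mul'' _ (m3 _)]
  rw [← lintegral_tsum fun k => (m3 k).const_mul _,
    ← lintegral_add_left' (m1.const_mul _)]
  have m4 : AEMeasurable (fun x => A * ENNReal.ofReal (F x)
      + D * ENNReal.ofReal (a x ^ 2 * F x)) μ₁ := (m1.const_mul _).add (m2.const_mul _)
  rw [← lintegral_add_left' m4]
  refine lintegral_congr fun x => ?_
  unfold kernelMix
  rw [add_mul, add_mul, ← ENNReal.tsum_mul_right, mul_assoc D,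
    ← ENNReal.ofReal_mul (sq_nonneg _)]
  congr 1
  refine tsum_congr fun k => ?_
  rw [mul_assoc, ← ENNReal.ofReal_mul (by positivity)]

end Operators

/-! ### Sufficiency of quasiconcavity -/

/-- Quasiconcavity on `[1, ∞)` is sufficient for interpolation. -/
lemma isInterpolationParameter_of_quasiconcave (ψ : ℝ → ℝ)
    (hmeas : Measurable (fun t : Set.Ioi (0 : ℝ) => ψ t.1))
    (hψ : ∀ s, 1 ≤ s → 0 < ψ s) (hbelow : ∃ m : ℝ, 0 < m ∧ ∀ t : ℝ, 1 ≤ t → m ≤ ψ t)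
    (c : ℝ) (hc : 0 < c) (h : ∀ s t, 1 ≤ s → 1 ≤ t → ψ t ≤ c * max 1 (t / s) * ψ s) :
    IsInterpolationParameter ψ := by
  obtain ⟨A, D, e, K, hK, hmix⟩ := exists_kernelMix ψ hψ c hc h
  obtain ⟨m, hm, hmψ⟩ := hbelow
  rintro Ω₁ Ω₂ _ _ μ₁ μ₂ a b ha hb ha1 hb1 T ⟨C0, hC0, h0⟩ ⟨C1, hC1, h1⟩
  set M := max (C0 ^ 2) (C1 ^ 2) with hMd
  have hM : 0 < M := lt_max_of_lt_left (by positivity)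
  have h0' : ∀ f, WMem μ₁ (fun _ => 1) f → WMem μ₂ (fun _ => 1) (T f) ∧
      ∫ x, ‖T f x‖ ^ 2 ∂μ₂ ≤ M * ∫ x, ‖f x‖ ^ 2 ∂μ₁ := by
    intro f hf
    refine ⟨(h0 f hf).1, ?_⟩
    have := integral_le_of_wnorm_le (h0 f hf).2
    simp only [one_pow, one_mul] at this
    refine this.trans (mul_le_mul_of_nonneg_right (le_max_left _ _) ?_)
    exact integral_nonneg fun x => by positivity
  have h1' : ∀ f, WMem μ₁ a f → WMem μ₂ b (T f) ∧
      ∫ x, b x ^ 2 * ‖T f x‖ ^ 2 ∂μ₂ ≤ M * ∫ x, a x ^ 2 * ‖f x‖ ^ 2 ∂μ₁ := by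
    intro f hf
    refine ⟨(h1 f hf).1, (integral_le_of_wnorm_le (h1 f hf).2).trans
      (mul_le_mul_of_nonneg_right (le_max_right _ _) ?_)⟩
    exact integral_nonneg fun x => by positivity
  have hψa : Measurable fun x => ψ (a x) :=
    hmeas.comp (ha.subtype_mk (h := fun x => show (0 : ℝ) < a x by linarith [ha1 x]))
  have hψb : Measurable fun x => ψ (b x) :=
    hmeas.comp (hb.subtype_mk (h := fun x => show (0 : ℝ) < b x by linarith [hb1 x]))
  have hN : 0 < K * M * K := by positivity
  -- The endpoint bounds are summed against the mixture, term by term, in `[0, ∞]`.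
  have key : ∀ f, WMem μ₁ (fun x => ψ (a x)) f →
      AEStronglyMeasurable (fun x => ‖T f x‖ ^ 2) μ₂ ∧
      ∫⁻ x, ENNReal.ofReal (ψ (b x) ^ 2 * ‖T f x‖ ^ 2) ∂μ₂
        ≤ ENNReal.ofReal (K * M * K)
          * ∫⁻ x, ENNReal.ofReal (ψ (a x) ^ 2 * ‖f x‖ ^ 2) ∂μ₁ := by
    intro f hf
    have hFI : Integrable (fun x => ‖f x‖ ^ 2) μ₁ := by
      have h2 : Integrable (fun x => (ψ (a x) ^ 2)⁻¹ * (ψ (a x) ^ 2 * ‖f x‖ ^ 2)) μ₁ := by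
        refine integrable_mul_of_le (c := (m ^ 2)⁻¹) hf (hψa.pow_const 2).inv
          (fun x => by positivity) fun x => ?_
        have := hmψ (a x) (ha1 x)
        gcongr
      refine h2.congr (Filter.Eventually.of_forall fun x => ?_)
      have := hψ (a x) (ha1 x)
      dsimp only
      field_simp
    have hf1 : WMem μ₁ (fun _ => 1) f := by simpa [WMem] using hFI
    have hTI : Integrable (fun x => ‖T f x‖ ^ 2) μ₂ := by simpa [WMem] using (h0' f hf1).1
    refine ⟨hTI.aestronglyMeasurable, ?_⟩
    have hmid : ∫⁻ x, kernelMix A D e (b x) * ENNReal.ofReal (‖T f x‖ ^ 2) ∂μ₂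
        ≤ ENNReal.ofReal M
          * ∫⁻ x, kernelMix A D e (a x) * ENNReal.ofReal (‖f x‖ ^ 2) ∂μ₁ := by
      rw [lintegral_kernelMix A D e hb hTI.aestronglyMeasurable,
        lintegral_kernelMix A D e ha hFI.aestronglyMeasurable, mul_add, mul_add,
        ← ENNReal.tsum_mul_left]
      refine add_le_add (add_le_add ?_ ?_) (ENNReal.tsum_le_tsum fun k => ?_)
      · rw [mul_left_comm]
        gcongr
        exact lintegral_le_of_integral_le hFI hTI (fun x => by positivity)
          (fun x => by positivity) hM.le (h0' f hf1).2
      · rw [mul_left_comm]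
        gcongr
        by_cases hfa : WMem μ₁ a f
        · exact lintegral_le_of_integral_le hfa (h1' f hfa).1 (fun x => by positivity)
            (fun x => by positivity) hM.le (h1' f hfa).2
        · -- Outside the second endpoint space the right-hand side is infinite.
          have : ∫⁻ x, ENNReal.ofReal (a x ^ 2 * ‖f x‖ ^ 2) ∂μ₁ = ⊤ := by
            by_contra hne
            refine hfa ⟨(ha.pow_const 2).aestronglyMeasurable.mul hFI.aestronglyMeasurable, ?_⟩
            rw [hasFiniteIntegral_iff_ofReal (Filter.Eventually.of_forall fun x => by positivity)]
            exact lt_top_iff_ne_top.2 hne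
          rw [this, ENNReal.mul_top (by simpa using hM)]
          exact le_top
      · rw [mul_left_comm]
        gcongr
        have hk : (0 : ℝ) < (k : ℝ) + 1 := by positivity
        refine lintegral_le_of_integral_le ?_ ?_ (fun x => by positivity)
          (fun x => by positivity) hM.le (integral_kernel_le ha hb T h0' h1' hk hf1)
        · refine integrable_mul_of_le hFI (by fun_prop) (c := 1) (fun x => by positivity)
            fun x => ?_
          rw [div_le_one (by positivity)]
          linarith
        · refine integrable_mul_of_le hTI (by fun_prop) (c := 1) (fun x => by positivity)
            fun x => ?_
          rw [div_le_one (by positivity)]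
          linarith
    calc ∫⁻ x, ENNReal.ofReal (ψ (b x) ^ 2 * ‖T f x‖ ^ 2) ∂μ₂
        ≤ ∫⁻ x, ENNReal.ofReal K
            * (kernelMix A D e (b x) * ENNReal.ofReal (‖T f x‖ ^ 2)) ∂μ₂ := by
          refine lintegral_mono fun x => ?_
          dsimp only
          rw [ENNReal.ofReal_mul (sq_nonneg _), ← mul_assoc]
          gcongr
          exact (hmix (b x) (hb1 x)).1
      _ = ENNReal.ofReal K
            * ∫⁻ x, kernelMix A D e (b x) * ENNReal.ofReal (‖T f x‖ ^ 2) ∂μ₂ :=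
          lintegral_const_mul' _ _ ENNReal.ofReal_ne_top
      _ ≤ ENNReal.ofReal K * (ENNReal.ofReal M
            * ∫⁻ x, kernelMix A D e (a x) * ENNReal.ofReal (‖f x‖ ^ 2) ∂μ₁) := by gcongr
      _ ≤ ENNReal.ofReal K * (ENNReal.ofReal M * ∫⁻ x, ENNReal.ofReal K
            * ENNReal.ofReal (ψ (a x) ^ 2 * ‖f x‖ ^ 2) ∂μ₁) := by
          refine mul_le_mul_right (mul_le_mul_right (lintegral_mono fun x => ?_) _) _
          dsimp only
          rw [ENNReal.ofReal_mul (sq_nonneg _), ← mul_assoc]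
          gcongr
          exact (hmix (a x) (ha1 x)).2
      _ = _ := by
          rw [lintegral_const_mul' _ _ ENNReal.ofReal_ne_top, ENNReal.ofReal_mul (by positivity),
            ENNReal.ofReal_mul hK.le]
          ring
  refine ⟨√(K * M * K), Real.sqrt_pos.2 hN, fun f hf => ?_⟩
  obtain ⟨hmeasT, hle⟩ := key f hf
  have hfin : ∫⁻ x, ENNReal.ofReal (ψ (a x) ^ 2 * ‖f x‖ ^ 2) ∂μ₁ ≠ ⊤ :=
    ((hasFiniteIntegral_iff_ofReal (Filter.Eventually.of_forall fun x => by positivity)).1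
      hf.2).ne
  have hTm : WMem μ₂ (fun x => ψ (b x)) (T f) := by
    refine ⟨(hψb.pow_const 2).aestronglyMeasurable.mul hmeasT, ?_⟩
    rw [hasFiniteIntegral_iff_ofReal (Filter.Eventually.of_forall fun x => by positivity)]
    exact hle.trans_lt (ENNReal.mul_lt_top ENNReal.ofReal_lt_top (lt_top_iff_ne_top.2 hfin))
  refine ⟨hTm, ?_⟩
  have hint : ∫ x, ψ (b x) ^ 2 * ‖T f x‖ ^ 2 ∂μ₂
      ≤ K * M * K * ∫ x, ψ (a x) ^ 2 * ‖f x‖ ^ 2 ∂μ₁ := by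
    have i0 : 0 ≤ ∫ x, ψ (a x) ^ 2 * ‖f x‖ ^ 2 ∂μ₁ := integral_nonneg fun x => by positivity
    rw [← ENNReal.ofReal_le_ofReal_iff (by positivity), ENNReal.ofReal_mul hN.le,
      ofReal_integral_eq_lintegral_ofReal hTm (Filter.Eventually.of_forall fun x => by positivity),
      ofReal_integral_eq_lintegral_ofReal hf (Filter.Eventually.of_forall fun x => by positivity)]
    exact hle
  unfold wnorm
  rw [← Real.sqrt_eq_rpow, ← Real.sqrt_eq_rpow, ← Real.sqrt_mul hN.le]
  exact Real.sqrt_le_sqrt hint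

/-! ### Necessity of quasiconcavity -/

/-- An interpolation parameter is quasiconcave: a failure along pairs `(s n, t n)` makes the
diagonal operator `f n ↦ min (1, s n / t n) f n` between sequence spaces with weights `s` and `t`
a contraction on both endpoint spaces that is unbounded between the `ψ`-spaces. -/
lemma quasiconcave_of_isInterpolationParameter (ψ : ℝ → ℝ) (hψ : ∀ s, 1 ≤ s → 0 < ψ s)
    (h : IsInterpolationParameter ψ) :
    ∃ c : ℝ, 0 < c ∧ ∀ s t, 1 ≤ s → 1 ≤ t → ψ t ≤ c * max 1 (t / s) * ψ s := by
  by_contra! hcon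
  choose s t hs ht hst using fun n : ℕ => hcon ((n : ℝ) + 1) (by positivity)
  have hs0 : ∀ n, 0 < s n := fun n => by linarith [hs n]
  have ht0 : ∀ n, 0 < t n := fun n => by linarith [ht n]
  set r : ℕ → ℝ := fun n => min 1 (s n / t n) with hr
  have hr0 : ∀ n, 0 < r n := fun n => lt_min one_pos (div_pos (hs0 n) (ht0 n))
  let T : (ℕ → ℂ) →ₗ[ℂ] (ℕ → ℂ) := LinearMap.pi fun n => (r n : ℂ) • LinearMap.proj n
  have hT : ∀ f n, ‖T f n‖ = r n * ‖f n‖ := by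
    intro f n
    simp [T, abs_of_pos (hr0 n)]
  have contr : ∀ u v : ℕ → ℝ, (∀ n, 0 ≤ v n) → (∀ n, v n * r n ≤ u n) →
      ∃ C0 : ℝ, 0 < C0 ∧ ∀ f, WMem Measure.count u f → WMem Measure.count v (T f) ∧
        wnorm Measure.count v (T f) ≤ C0 * wnorm Measure.count u f := by
    intro u v hv huv
    refine ⟨1, one_pos, fun f hf => ?_⟩
    have hpt : ∀ n, v n ^ 2 * ‖T f n‖ ^ 2 ≤ u n ^ 2 * ‖f n‖ ^ 2 := by
      intro n
      rw [hT, mul_pow, ← mul_assoc, ← mul_pow]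
      gcongr
      · exact mul_nonneg (hv n) (hr0 n).le
      · exact huv n
    have hmem : WMem Measure.count v (T f) := by
      refine Integrable.mono' hf Measurable.of_discrete.aestronglyMeasurable
        (Filter.Eventually.of_forall fun n => ?_)
      rw [Real.norm_of_nonneg (by positivity)]
      exact hpt n
    refine ⟨hmem, ?_⟩
    rw [one_mul]
    unfold wnorm
    refine Real.rpow_le_rpow (integral_nonneg fun x => by positivity) ?_ (by norm_num)
    exact integral_mono hmem hf hpt
  obtain ⟨C, hC, hCf⟩ := h ℕ ℕ ⊤ ⊤ Measure.count Measure.count s t measurable_from_top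
    measurable_from_top hs ht T
    (contr _ _ (fun _ => zero_le_one) fun n => by rw [one_mul]; exact min_le_left _ _)
    (contr _ _ (fun n => (ht0 n).le) fun n => by
      calc t n * r n ≤ t n * (s n / t n) :=
            mul_le_mul_of_nonneg_left (min_le_right _ _) (ht0 n).le
        _ = s n := mul_div_cancel₀ _ (ht0 n).ne')
  have hnorm : ∀ (w : ℕ → ℝ) (n : ℕ) (g : ℕ → ℂ), 0 ≤ w n → (∀ k, k ≠ n → g k = 0) →
      WMem Measure.count w g ∧ wnorm Measure.count w g = w n * ‖g n‖ := by
    intro w n g hw hg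
    have hsupp : ∀ k ∉ ({n} : Finset ℕ), w k ^ 2 * ‖g k‖ ^ 2 = 0 := by
      intro k hk
      rw [hg k (by simpa using hk)]
      simp
    have hI : Integrable (fun k => w k ^ 2 * ‖g k‖ ^ 2) Measure.count := by
      rw [integrable_count_iff]
      exact (hasSum_sum_of_ne_finset_zero hsupp).summable.norm
    refine ⟨hI, ?_⟩
    unfold wnorm
    rw [integral_countable hI]
    simp only [measureReal_def, Measure.count_singleton, ENNReal.toReal_one, one_smul]
    rw [tsum_eq_sum hsupp, Finset.sum_singleton, ← mul_pow, ← Real.sqrt_eq_rpow,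
      Real.sqrt_sq (by positivity)]
  -- The unit vector at an index beyond `C` contradicts the bound `C`.
  obtain ⟨n, hn⟩ := exists_nat_gt C
  have hψs := hψ _ (hs n)
  have hψt := hψ _ (ht n)
  obtain ⟨m1, w1⟩ := hnorm (fun k => ψ (s k)) n (Pi.single n 1) hψs.le
    fun k hk => Pi.single_eq_of_ne hk _
  have hTz : ∀ k, k ≠ n → T (Pi.single n 1) k = 0 := by
    intro k hk
    rw [← norm_eq_zero, hT, Pi.single_eq_of_ne hk]
    simp
  obtain ⟨-, w2⟩ := hnorm (fun k => ψ (t k)) n (T (Pi.single n 1)) hψt.le hTz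
  have hfin := (hCf _ m1).2
  rw [w1, w2, hT, Pi.single_eq_same, norm_one, mul_one, mul_one] at hfin
  have hrm : r n * max 1 (t n / s n) = 1 := by
    have p1 := hs0 n
    have p2 := ht0 n
    simp only [hr]
    rcases le_total (s n) (t n) with h' | h'
    · rw [min_eq_right ((div_le_one p2).2 h'), max_eq_right ((one_le_div p1).2 h')]
      field_simp
    · rw [min_eq_left ((one_le_div p2).2 h'), max_eq_left ((div_le_one p1).2 h'), one_mul]
  have h3 := mul_lt_mul_of_pos_right (hst n) (hr0 n)
  have h4 : ((n : ℝ) + 1) * max 1 (t n / s n) * ψ (s n) * r n = ((n : ℝ) + 1) * ψ (s n) := by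
    calc _ = ((n : ℝ) + 1) * ψ (s n) * (r n * max 1 (t n / s n)) := by ring
      _ = _ := by rw [hrm, mul_one]
  rw [h4] at h3
  nlinarith

/-! ### From pseudoconcavity near infinity to quasiconcavity -/

/-- A positive concave function on `[r, ∞)` is nondecreasing, since a decreasing chord would force
it below zero eventually. -/
lemma concave_pos_mono {r : ℝ} {g : ℝ → ℝ} (hg : ConcaveOn ℝ (Set.Ici r) g)
    (hpos : ∀ t, r ≤ t → 0 < g t) {s t : ℝ} (hs : r ≤ s) (hst : s ≤ t) : g s ≤ g t := by
  by_contra! hlt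
  have hst' : s < t := lt_of_le_of_ne hst (by rintro rfl; exact lt_irrefl _ hlt)
  -- The chord through `s` and `t` vanishes at `u`.
  set u := t + g t * (t - s) / (g s - g t) with hu
  have hd : 0 < g s - g t := by linarith
  have hgt := hpos t (hs.trans hst)
  have htu : t < u := by
    have : 0 < g t * (t - s) / (g s - g t) := div_pos (mul_pos hgt (by linarith)) hd
    linarith
  have hgu := hpos u (by linarith)
  have hslope := hg.slope_anti_adjacent (x := s) (y := t) (z := u) hs
    (show r ≤ u by linarith) hst' htu
  rw [div_le_div_iff₀ (by linarith) (by linarith)] at hslope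
  have hu2 : (u - t) * (g s - g t) = g t * (t - s) := by
    rw [hu]; field_simp; ring
  nlinarith [mul_pos hgu (show 0 < t - s by linarith)]

/-- Pseudoconcavity near infinity, together with two-sided bounds on compact intervals, gives
quasiconcavity on all of `[1, ∞)`. -/
lemma quasiconcave_of_pseudoconcave (ψ : ℝ → ℝ)
    (hbdd : ∀ a b : ℝ, 0 < a → a ≤ b → ∃ M : ℝ, ∀ t ∈ Set.Icc a b, ψ t ≤ M)
    {m : ℝ} (hm : 0 < m) (hmψ : ∀ t : ℝ, 1 ≤ t → m ≤ ψ t)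
    {r : ℝ} (hr : 0 < r) {g : ℝ → ℝ} (hg : ConcaveOn ℝ (Set.Ici r) g)
    (hgpos : ∀ t : ℝ, r ≤ t → 0 < g t) {c : ℝ} (hc : 1 ≤ c)
    (heq : ∀ t : ℝ, r ≤ t → c⁻¹ * g t ≤ ψ t ∧ ψ t ≤ c * g t) :
    ∃ c : ℝ, 0 < c ∧ ∀ s t, 1 ≤ s → 1 ≤ t → ψ t ≤ c * max 1 (t / s) * ψ s := by
  have hc0 : 0 < c := by linarith
  set R := max (2 * r) 1 with hR
  have hR1 : 1 ≤ R := le_max_right _ _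
  have hR2 : 2 * r ≤ R := le_max_left _ _
  obtain ⟨M, hM⟩ := hbdd 1 R one_pos hR1
  have hmM : m ≤ M := (hmψ 1 le_rfl).trans (hM 1 ⟨le_rfl, hR1⟩)
  -- Staying above `2 * r` keeps `s - r` comparable with `s`.
  have hgq : ∀ s t, R ≤ s → R ≤ t → g t ≤ 2 * max 1 (t / s) * g s := by
    intro s t hs ht
    have hgs := hgpos s (by linarith)
    rcases le_or_gt t s with h | h
    · have h1 := concave_pos_mono hg hgpos (show r ≤ t by linarith) h
      nlinarith [le_max_left 1 (t / s)]
    · have hgr := hgpos r le_rfl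
      have hsl := hg.slope_anti_adjacent (x := r) (y := s) (z := t) (le_refl r)
        (show r ≤ t by linarith) (by linarith) h
      rw [div_le_div_iff₀ (by linarith) (by linarith)] at hsl
      have h2 : g t * s ≤ 2 * t * g s := by
        have h3 : g t * (s - r) ≤ (t - r) * g s := by
          nlinarith [mul_pos hgr (show 0 < t - s by linarith)]
        have hgt := hgpos t (by linarith)
        nlinarith
      calc g t ≤ 2 * (t / s) * g s := by
            have hs0 : 0 < s := by linarith
            rw [mul_div_assoc', div_mul_eq_mul_div, le_div_iff₀ hs0]
            exact h2
        _ ≤ _ := by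
            gcongr
            exact le_max_right _ _
  have hψq : ∀ s t, R ≤ s → R ≤ t → ψ t ≤ 2 * c ^ 2 * max 1 (t / s) * ψ s := by
    intro s t hs ht
    have h1 := (heq t (by linarith)).2
    have h2 := (heq s (by linarith)).1
    have h3 : g s ≤ c * ψ s := by
      rw [inv_mul_le_iff₀ hc0] at h2
      exact h2
    have hmax : 0 < max 1 (t / s) := lt_max_of_lt_left one_pos
    calc ψ t ≤ c * g t := h1
      _ ≤ c * (2 * max 1 (t / s) * (c * ψ s)) := by
        gcongr
        exact (hgq s t hs ht).trans (by gcongr)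
      _ = _ := by ring
  have hMm : 1 ≤ M / m := (one_le_div hm).2 hmM
  refine ⟨2 * c ^ 2 * (M / m), by positivity, fun s t hs ht => ?_⟩
  have hψs : m ≤ ψ s := hmψ s hs
  have hψs0 : 0 < ψ s := by linarith
  have hMs : M ≤ M / m * ψ s := by
    rw [div_mul_eq_mul_div, le_div_iff₀ hm]
    have : 0 ≤ M := by linarith
    gcongr
  have hc2 : 1 ≤ 2 * c ^ 2 := by nlinarith
  have hmax : 1 ≤ max 1 (t / s) := le_max_left _ _
  rcases le_total t R with htR | htR
  · calc ψ t ≤ M := hM t ⟨ht, htR⟩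
      _ ≤ 1 * (M / m) * 1 * ψ s := by linarith
      _ ≤ _ := by gcongr
  · rcases le_total s R with hsR | hsR
    · have hψR := hM R ⟨hR1, le_rfl⟩
      have hs0 : 0 < s := by linarith
      calc ψ t ≤ 2 * c ^ 2 * max 1 (t / R) * ψ R := hψq R t le_rfl htR
        _ ≤ 2 * c ^ 2 * max 1 (t / s) * (M / m * ψ s) := by
          have hψR0 : 0 < ψ R := hm.trans_le (hmψ R hR1)
          gcongr
          exact hψR.trans hMs
        _ = _ := by ring
    · calc ψ t ≤ 2 * c ^ 2 * max 1 (t / s) * ψ s := hψq s t hsR htR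
        _ = 2 * c ^ 2 * 1 * max 1 (t / s) * ψ s := by ring
        _ ≤ _ := by gcongr

/-- A Borel measurable function `ψ : (0,∞) → (0,∞)`, bounded on compact subintervals
and bounded away from zero on every ray `[r,∞)`, is an interpolation parameter iff it
is pseudoconcave in a neighborhood of infinity, i.e., equivalent there to a positive
concave function. -/
theorem stmt18 (ψ : ℝ → ℝ)
    (hmeas : Measurable (fun t : Set.Ioi (0 : ℝ) => ψ t.1))
    (hpos : ∀ t : ℝ, 0 < t → 0 < ψ t)
    (hbdd : ∀ a b : ℝ, 0 < a → a ≤ b → ∃ M : ℝ, ∀ t ∈ Set.Icc a b, ψ t ≤ M)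
    (hbelow : ∀ r : ℝ, 0 < r → ∃ m : ℝ, 0 < m ∧ ∀ t : ℝ, r ≤ t → m ≤ ψ t) :
    IsInterpolationParameter ψ ↔
      ∃ r : ℝ, 0 < r ∧ ∃ g : ℝ → ℝ, ConcaveOn ℝ (Set.Ici r) g ∧
        (∀ t : ℝ, r ≤ t → 0 < g t) ∧
        ∃ c : ℝ, 1 ≤ c ∧ ∀ t : ℝ, r ≤ t → c⁻¹ * g t ≤ ψ t ∧ ψ t ≤ c * g t := by
  have hψ : ∀ s, 1 ≤ s → 0 < ψ s := fun s hs => hpos s (by linarith)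
  constructor
  · intro h
    obtain ⟨c, hc, hq⟩ := quasiconcave_of_isInterpolationParameter ψ hψ h
    refine ⟨1, one_pos, peetre ψ,
      (peetre_concave hψ).subset (Set.Ici_subset_Ici.2 zero_le_one) (convex_Ici 1),
      fun t ht => ?_, max c 2, le_max_of_le_right (by norm_num), fun t ht => ⟨?_, ?_⟩⟩
    · have h1 := le_mul_peetre hψ hc hq ht
      have h2 := hψ t ht
      exact pos_of_mul_pos_right (h2.trans_le h1) hc.le
    · rw [inv_mul_le_iff₀ (lt_max_of_lt_left hc)]
      exact (peetre_le_two hψ ht).trans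
        (mul_le_mul_of_nonneg_right (le_max_right _ _) (hψ t ht).le)
    · exact (le_mul_peetre hψ hc hq ht).trans
        (mul_le_mul_of_nonneg_right (le_max_left _ _) (peetre_nonneg hψ (by linarith)))
  · rintro ⟨r, hr, g, hg, hgpos, c, hc, heq⟩
    obtain ⟨m, hm, hmψ⟩ := hbelow 1 one_pos
    obtain ⟨c', hc', hq⟩ := quasiconcave_of_pseudoconcave ψ hbdd hm hmψ hr hg hgpos hc heq
    exact isInterpolationParameter_of_quasiconcave ψ hmeas hψ ⟨m, hm, hmψ⟩ c' hc' hq
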